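/- arXiv:2306.17081 — 2 statements merged into one kernel-verified Lean document; each statement's English description precedes it below -/
import Mathlib

section
/- Let q be a prime power, m ≥ 2, ρ and t positive integers with ρ ≤ m. Define U = {(x_1, x_1^q, …, x_1^{q^{ρ−1}}, …, x_{t−1}, x_{t−1}^q, …, x_{t−1}^{q^{ρ−1}}, a_1, …, a_ρ) : x_i ∈ F_{q^m}, a_j ∈ F_q} ⊆ F_{q^m}^{ρt}. Then for every v ∈ F_{q^m}^{ρt} there exist u_1, …, u_ρ ∈ U such that v ∈ ⟨u_1, …, u_ρ⟩_{F_{q^m}}. -/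
/-!
Let `σ` be an automorphism of a field `K` with fixed subfield `F`, and let `v = (w, b)` be the
vector to reach. The entries of `b` lie in the `F`-span of some `F`-independent
`l₁, …, l_ρ ∈ K`, and these `l_i` serve as the coefficients of the `u_i`: expanding each `b_j` in
the `l_i` gives the fixed coordinates of the `u_i`, and the others come from solving
`∑ i, l_i σ^j(x_i) = w_j`. Applying `σ^{-j}` turns this into a linear system in the `x_i`, whose
matrix `(σ^{-j}(l_i))` is the Moore matrix of the `l_i` with respect to `σ⁻¹`. Its rows are
independent by induction, as in the Casoratian criterion: if the first row is a combination of the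
others, apply the automorphism and subtract; this gives a relation between the rows of a smaller
Moore matrix, so the coefficients are fixed and the `l_i` were dependent over `F`.
-/

open Module Polynomial Submodule

section Extension

variable {F V : Type*} [DivisionRing F] [AddCommGroup V] [Module F V]

theorem exists_linearIndependent_finSnoc_mem_span {n : ℕ} {l : Fin n → V}
    (hl : LinearIndependent F l) (hn : n < Module.rank F V) (y : V) :
    ∃ x, LinearIndependent F (Fin.snoc l x : Fin (n + 1) → V) ∧
      y ∈ span F (Set.range (Fin.snoc l x : Fin (n + 1) → V)) := by
  by_cases hy : y ∈ span F (Set.range l)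
  · obtain ⟨x, hx⟩ := exists_linearIndependent_snoc_of_lt_rank hl hn
    refine ⟨x, hx, span_mono ?_ hy⟩
    rw [Fin.range_snoc]
    exact Set.subset_insert _ _
  · exact ⟨y, linearIndependent_finSnoc.mpr ⟨hl, hy⟩, subset_span ⟨Fin.last n, by simp⟩⟩

theorem exists_linearIndependent_forall_mem_span {n : ℕ} (hn : n ≤ Module.rank F V)
    (b : Fin n → V) :
    ∃ l : Fin n → V, LinearIndependent F l ∧ ∀ j, b j ∈ span F (Set.range l) := by
  induction n with
  | zero => exact ⟨b, linearIndependent_empty_type, fun j => j.elim0⟩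
  | succ n ih =>
    have hn' : (n : Cardinal) < Module.rank F V :=
      lt_of_lt_of_le (by exact_mod_cast n.lt_succ_self) hn
    obtain ⟨l, hl, hb⟩ := ih hn'.le (Fin.init b)
    obtain ⟨x, hx, hlast⟩ := exists_linearIndependent_finSnoc_mem_span hl hn' (b (Fin.last n))
    refine ⟨_, hx, Fin.lastCases hlast fun j => span_mono ?_ (hb j)⟩
    rw [Fin.range_snoc]
    exact Set.subset_insert _ _

end Extension

section Field

variable {K : Type*} [Field K]

/-- The subfield of elements fixed by a field endomorphism. It plays the role of `F_q`, which it is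
for the Frobenius `x ↦ x ^ q` of a field containing `F_q`. -/
def fixedSubfield (σ : K →+* K) : Subfield K :=
  σ.eqLocusField (RingHom.id K)

theorem mem_fixedSubfield {σ : K →+* K} {x : K} : x ∈ fixedSubfield σ ↔ σ x = x :=
  Iff.rfl

theorem fixedSubfield_symm (σ : K ≃+* K) :
    fixedSubfield (σ.symm : K →+* K) = fixedSubfield (σ : K →+* K) := by
  ext x
  exact σ.symm_apply_eq.trans eq_comm

theorem linearIndependent_comp_fixedSubfield {ι : Type*} {σ : K →+* K} {l : ι → K}
    (hl : LinearIndependent (fixedSubfield σ) l) :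
    LinearIndependent (fixedSubfield σ) (σ ∘ l) :=
  hl.map_of_injective_injective id σ.toAddMonoidHom (fun _ => id)
    (fun _ => (map_eq_zero σ).mp) fun c x => by
      simp [Subfield.smul_def, mem_fixedSubfield.mp c.2]

/-- The square Moore matrix of a family with respect to a field endomorphism, used to solve
`∑ i, l i * σ^j (x i) = w j`. The members of the family index the rows; the transposed convention is
also common. -/
def mooreMatrix (σ : K →+* K) {n : ℕ} (l : Fin n → K) : Matrix (Fin n) (Fin n) K :=
  Matrix.of fun i j => σ^[j] (l i)

theorem linearIndependent_row_mooreMatrix {σ : K →+* K} {n : ℕ} {l : Fin n → K}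
    (hl : LinearIndependent (fixedSubfield σ) l) :
    LinearIndependent K (mooreMatrix σ l).row := by
  induction n with
  | zero => exact linearIndependent_empty_type
  | succ n ih =>
    obtain ⟨htail, hhead⟩ := linearIndependent_finSucc.mp hl
    have hshift : LinearIndependent K fun (i j : Fin n) => σ^[j + 1] (l i.succ) :=
      ih (linearIndependent_comp_fixedSubfield htail)
    refine linearIndependent_finSucc.mpr ⟨?_, fun hmem => hhead ?_⟩
    · exact hshift.of_comp (LinearMap.funLeft K K Fin.succ)
    · obtain ⟨c, hc⟩ := (mem_span_range_iff_exists_fun K).mp hmem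
      replace hc (j : Fin (n + 1)) : ∑ i, c i * σ^[j] (l i.succ) = σ^[j] (l 0) := by
        simpa [mooreMatrix, Fin.tail] using congrFun hc j
      have hrel : ∑ i, (σ (c i) - c i) • (fun j : Fin n => σ^[j + 1] (l i.succ)) = 0 := by
        ext j
        have himage := congrArg σ (hc j.castSucc)
        have hnext := hc j.succ
        simp only [map_sum, map_mul, Fin.val_castSucc, Fin.val_succ,
          ← Function.iterate_succ_apply'] at himage hnext
        simp [sub_mul, himage, hnext, -Function.iterate_succ]
      have hfix (i : Fin n) : c i ∈ fixedSubfield σ :=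
        sub_eq_zero.mp (Fintype.linearIndependent_iff.mp hshift _ hrel i)
      exact (mem_span_range_iff_exists_fun _).mpr ⟨fun i => ⟨c i, hfix i⟩, by
        simpa [Subfield.smul_def, Fin.tail] using hc 0⟩

theorem exists_sum_mul_iterate_eq {σ : K ≃+* K} {n : ℕ} {l : Fin n → K}
    (hl : LinearIndependent (fixedSubfield (σ : K →+* K)) l) (w : Fin n → K) :
    ∃ x : Fin n → K, ∀ j : Fin n, ∑ i, l i * σ^[j] (x i) = w j := by
  have hunit : IsUnit (mooreMatrix (σ.symm : K →+* K) l) := by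
    rw [← fixedSubfield_symm] at hl
    exact Matrix.linearIndependent_rows_iff_isUnit.mp (linearIndependent_row_mooreMatrix hl)
  obtain ⟨x, hx⟩ := Matrix.vecMul_surjective_iff_isUnit.mpr hunit fun j => σ.symm^[j] (w j)
  refine ⟨x, fun j => ?_⟩
  have hcancel (y : K) : σ^[j] (σ.symm^[j] y) = y :=
    Function.LeftInverse.iterate σ.apply_symm_apply j y
  have hj : ∑ i, x i * σ.symm^[j] (l i) = σ.symm^[j] (w j) := congrFun hx j
  calc ∑ i, l i * σ^[j] (x i)
      = σ^[j] (∑ i, x i * σ.symm^[j] (l i)) := by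
        rw [← RingHom.coe_coe σ, ← RingHom.coe_pow, map_sum]
        simp [mul_comm, hcancel]
    _ = w j := by rw [hj, hcancel]

theorem card_fixedSubfield_le {σ : K →+* K} {q : ℕ} (hq : 1 < q) (hσ : ∀ x, σ x = x ^ q) :
    Nat.card (fixedSubfield σ) ≤ q := by
  have hroots : (fixedSubfield σ : Set K) = (X ^ q - X : K[X]).rootSet K := by
    ext x
    simp [mem_rootSet, FiniteField.X_pow_card_sub_X_ne_zero K hq, sub_eq_zero,
      mem_fixedSubfield, hσ]
  calc Nat.card (fixedSubfield σ)
      = ((X ^ q - X : K[X]).rootSet K).ncard := by rw [← hroots]; rfl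
    _ ≤ (X ^ q - X : K[X]).natDegree := ncard_rootSet_le _ _
    _ = q := FiniteField.X_pow_card_sub_X_natDegree_eq K hq

theorem le_finrank_fixedSubfield [Finite K] {σ : K →+* K} {q m : ℕ} (hq : 1 < q)
    (hσ : ∀ x, σ x = x ^ q) (hK : q ^ m ≤ Nat.card K) : m ≤ finrank (fixedSubfield σ) K := by
  refine (Nat.pow_le_pow_iff_right hq).mp ?_
  calc q ^ m
      ≤ Nat.card K := hK
    _ = Nat.card (fixedSubfield σ) ^ finrank (fixedSubfield σ) K := natCard_eq_pow_finrank
    _ ≤ q ^ finrank (fixedSubfield σ) K := Nat.pow_le_pow_left (card_fixedSubfield_le hq hσ) _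

theorem exists_ringEquiv_eq_pow [Finite K] {p k : ℕ} (hp : p.Prime)
    (hK : Nat.card K = p ^ k) (n : ℕ) : ∃ σ : K ≃+* K, ∀ x, σ x = x ^ p ^ n := by
  have : Fact p.Prime := ⟨hp⟩
  have : Fintype K := Fintype.ofFinite K
  have : CharP K p := charP_of_card_eq_prime_pow (Nat.card_eq_fintype_card.symm.trans hK)
  exact ⟨iterateFrobeniusEquiv K p n, iterateFrobeniusEquiv_def K p n⟩

end Field

theorem stmt6_general {K ι : Type*} [Field K] (σ : K ≃+* K) {ρ : ℕ}
    (hρ : ρ ≤ Module.rank (fixedSubfield (σ : K →+* K)) K)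
    (v : (ι → Fin ρ → K) × (Fin ρ → K)) :
    ∃ u : Fin ρ → (ι → Fin ρ → K) × (Fin ρ → K),
      (∀ i, ∃ x : ι → K, ∃ a : Fin ρ → K,
        (∀ j, σ (a j) = a j) ∧ u i = (fun s (j : Fin ρ) => σ^[j] (x s), a)) ∧
      v ∈ span K (Set.range u) := by
  obtain ⟨w, b⟩ := v
  obtain ⟨l, hl, hb⟩ := exists_linearIndependent_forall_mem_span hρ b
  choose a ha using fun j => (mem_span_range_iff_exists_fun _).mp (hb j)
  choose x hx using fun s => exists_sum_mul_iterate_eq hl (w s)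
  refine ⟨fun i => (fun s j => σ^[j] (x s i), fun j => a j i),
    fun i => ⟨fun s => x s i, fun j => a j i, fun j => mem_fixedSubfield.mp (a j i).2, rfl⟩,
    (mem_span_range_iff_exists_fun K).mpr ⟨l, ?_⟩⟩
  ext s j
  · simpa [Prod.fst_sum] using hx s j
  · simpa [Prod.snd_sum, Subfield.smul_def, mul_comm] using ha s

/-- The subspace `U = {(x_1,…,x_1^{q^{ρ-1}},…,x_{t-1},…,x_{t-1}^{q^{ρ-1}},a_1,…,a_ρ)}`
of `F_{q^m}^{ρt}` is rank `ρ`-saturating: every vector lies in the `F_{q^m}`-span of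
`ρ` elements of `U`. -/
theorem stmt6 (q m ρ t : ℕ) (hq : ∃ p n : ℕ, p.Prime ∧ 0 < n ∧ q = p ^ n)
    (hm : 2 ≤ m) (hρ : 0 < ρ) (hρm : ρ ≤ m) (ht : 1 ≤ t)
    (K : Type*) [Field K] [Fintype K] (hK : Fintype.card K = q ^ m) :
    ∀ v : (Fin (t - 1) → Fin ρ → K) × (Fin ρ → K),
      ∃ u : Fin ρ → (Fin (t - 1) → Fin ρ → K) × (Fin ρ → K),
        (∀ i, ∃ x : Fin (t - 1) → K, ∃ a : Fin ρ → K,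
          (∀ j, (a j) ^ q = a j) ∧ u i = (fun s (j : Fin ρ) => (x s) ^ q ^ (j : ℕ), a)) ∧
        v ∈ Submodule.span K (Set.range u) := by
  obtain ⟨p, n, hp, hn, rfl⟩ := hq
  have hcard : Nat.card K = (p ^ n) ^ m := Nat.card_eq_fintype_card.trans hK
  obtain ⟨σ, hσ⟩ := exists_ringEquiv_eq_pow hp (hcard.trans (pow_mul p n m).symm) n
  have hrank : (ρ : Cardinal) ≤ Module.rank (fixedSubfield (σ : K →+* K)) K := by
    rw [← finrank_eq_rank, Nat.cast_le]
    exact hρm.trans (le_finrank_fixedSubfield (Nat.one_lt_pow hn.ne' hp.one_lt) hσ hcard.ge)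
  have hiter (j : ℕ) (x : K) : σ^[j] x = x ^ (p ^ n) ^ j := by
    rw [funext hσ, pow_iterate]
  simpa only [hσ, hiter] using stmt6_general (ι := Fin (t - 1)) σ hrank
end

section
/- Let q be a prime power and k, k', ρ, ρ', m positive integers with ρ ≤ min{k, m}, ρ' ≤ min{k', m}, and ρ + ρ' ≤ min{k + k', m}. If U ⊆ F_{q^m}^k is a rank ρ-saturating system and U' ⊆ F_{q^m}^{k'} is a rank ρ'-saturating system, then U ⊕ U' ⊆ F_{q^m}^{k+k'} is a rank ρ''-saturating system with ρ'' ≤ ρ + ρ'; i.e., every v ∈ F_{q^m}^{k+k'} lies in the F_{q^m}-span of ρ + ρ' elements of U ⊕ U'. In particular s_{q^m/q}(k+k', ρ+ρ') ≤ s_{q^m/q}(k, ρ) + s_{q^m/q}(k', ρ'). -/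
/-!
Embed tuples from `U` and `U'` in the first and second summand of `V × V'`. The span of the
concatenated tuple is the direct sum of the two spans, so tuples chosen for the two components of a
vector together span that vector.
-/

section

variable {K V V' : Type*} [Semiring K] [AddCommMonoid V] [Module K V] [AddCommMonoid V']
  [Module K V']

variable (K) in
/-- `ρ`-saturating sets: every vector lies in the `K`-span of `ρ` elements of `U`. This phrases the
covering condition on the points of the linear set `L_U` with vectors. The elements of `U` may
repeat or vanish and `ρ` need not be minimal, so for subspaces `U` the rank is at most `ρ`. -/
def IsSaturating (ρ : ℕ) (U : Set V) : Prop :=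
  ∀ v : V, ∃ u : Fin ρ → V, (∀ i, u i ∈ U) ∧ v ∈ Submodule.span K (Set.range u)

theorem range_finAppend {α : Type*} {m n : ℕ} (a : Fin m → α) (b : Fin n → α) :
    Set.range (Fin.append a b) = Set.range a ∪ Set.range b := by
  rw [← Set.Sum.elim_range, ← Fin.append_comp_sumElim]
  exact (finSumFinEquiv.surjective.range_comp (Fin.append a b)).symm

theorem span_range_finAppend_inl_inr {m n : ℕ} (a : Fin m → V) (b : Fin n → V') :
    Submodule.span K (Set.range
        (Fin.append (LinearMap.inl K V V' ∘ a) (LinearMap.inr K V V' ∘ b))) =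
      (Submodule.span K (Set.range a)).prod (Submodule.span K (Set.range b)) := by
  rw [range_finAppend, Set.range_comp, Set.range_comp, LinearMap.span_inl_union_inr]

theorem stmt18_general {ρ ρ' : ℕ} {U : Set V} {U' : Set V'} (zero_mem : 0 ∈ U)
    (zero_mem' : 0 ∈ U') (hU : IsSaturating K ρ U) (hU' : IsSaturating K ρ' U') :
    IsSaturating K (ρ + ρ') (U ×ˢ U') := by
  rintro ⟨v, v'⟩
  obtain ⟨u, mem_U, hv⟩ := hU v
  obtain ⟨u', mem_U', hv'⟩ := hU' v'
  refine ⟨Fin.append (LinearMap.inl K V V' ∘ u) (LinearMap.inr K V V' ∘ u'), ?_, ?_⟩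
  · rw [← Set.range_subset_iff, range_finAppend, Set.union_subset_iff, Set.range_subset_iff,
      Set.range_subset_iff]
    exact ⟨fun i ↦ ⟨mem_U i, zero_mem'⟩, fun i ↦ ⟨zero_mem, mem_U' i⟩⟩
  · rw [span_range_finAppend_inl_inr]
    exact ⟨hv, hv'⟩

end

/-- Direct sums of saturating systems: if `U` is rank `ρ`-saturating in `F_{q^m}^k`
and `U'` is rank `ρ'`-saturating in `F_{q^m}^{k'}`, then every vector of
`F_{q^m}^{k+k'}` lies in the `F_{q^m}`-span of `ρ + ρ'` elements of `U ⊕ U'`. -/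
theorem stmt18 (q m k k' ρ ρ' : ℕ) (hq : ∃ p n : ℕ, p.Prime ∧ 0 < n ∧ q = p ^ n)
    (hρ : ρ ≤ min k m) (hρ' : ρ' ≤ min k' m) (hsum : ρ + ρ' ≤ min (k + k') m)
    (F K : Type*) [Field F] [Field K] [Algebra F K]
    [Fintype F] [Fintype K] (hF : Fintype.card F = q) (hcard : Fintype.card K = q ^ m)
    (U : Submodule F (Fin k → K)) (U' : Submodule F (Fin k' → K))
    (hU : ∀ v : Fin k → K, ∃ u : Fin ρ → (Fin k → K),
      (∀ i, u i ∈ U) ∧ v ∈ Submodule.span K (Set.range u))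
    (hU' : ∀ v : Fin k' → K, ∃ u : Fin ρ' → (Fin k' → K),
      (∀ i, u i ∈ U') ∧ v ∈ Submodule.span K (Set.range u)) :
    ∀ v : (Fin k → K) × (Fin k' → K), ∃ u : Fin (ρ + ρ') → (Fin k → K) × (Fin k' → K),
      (∀ i, u i ∈ U.prod U') ∧ v ∈ Submodule.span K (Set.range u) :=
  stmt18_general U.zero_mem U'.zero_mem hU hU'
end
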